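/- arXiv:1209.5904 — 2 statements merged into one kernel-verified Lean document; each statement's English description precedes it below -/
import Mathlib

section
/- Let α ∈ (0,1], let d ∈ ℕ with d > α, let i ∈ {1,…,d}, and let x, y ∈ ℝ^d satisfy xᵢ > 0, yᵢ > 0 and x ≠ y. Then 0 ≤ 1/|x − y|^(d−α) − 1/|x̂ − y|^(d−α) ≤ max(2, 2(d−α)) · |x − x̂| / (|x − y|^(d−α) · |x̂ − y|). -/
/-- The reflection `x̂ = x − 2xᵢeᵢ` of `x ∈ ℝ^d` across the hyperplane `{y : yᵢ = 0}`. -/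
noncomputable def reflectHyp (d : ℕ) (i : Fin d) (x : EuclideanSpace ℝ (Fin d)) :
    EuclideanSpace ℝ (Fin d) :=
  x - (2 * x i) • EuclideanSpace.single i (1 : ℝ)

/-!
For `0 < a ≤ b` and `t = a / b`, multiplying `1 / a ^ s - 1 / b ^ s` by `a ^ s` gives `1 - t ^ s`,
which is at most `max 1 s * (1 - t)`: by Bernoulli's inequality if `1 ≤ s`, and by `t ≤ t ^ s`
otherwise. With `a = |x - y|` and `b = |x̂ - y|`, the triangle inequality bounds `b - a` by
`|x - x̂|`. Two points on the same side of a mirror satisfy `a ≤ b`: for the reflection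
`x̂` of `x` in `Kᗮ` one has `|x̂ - y|² = |x - y|² + 4 re ⟪P x, y⟫`, where `P` is the orthogonal
projection onto `K`.
-/

open scoped InnerProductSpace

theorem one_sub_rpow_le_max_mul_one_sub {t : ℝ} (ht0 : 0 ≤ t) (ht1 : t ≤ 1) (s : ℝ) :
    1 - t ^ s ≤ max 1 s * (1 - t) := by
  rcases le_total s 1 with hs | hs
  · rw [max_eq_left hs, one_mul]
    exact sub_le_sub_left (Real.self_le_rpow_of_le_one ht0 ht1 hs) 1
  · have bernoulli : 1 + s * (t - 1) ≤ (1 + (t - 1)) ^ s :=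
      one_add_mul_self_le_rpow_one_add (by linarith) hs
    rw [add_sub_cancel] at bernoulli
    rw [max_eq_right hs]
    linarith

theorem one_div_rpow_sub_one_div_rpow_le {a b : ℝ} (ha : 0 < a) (hab : a ≤ b) (s : ℝ) :
    1 / a ^ s - 1 / b ^ s ≤ max 1 s * (b - a) / (a ^ s * b) := by
  have hb : 0 < b := ha.trans_le hab
  calc 1 / a ^ s - 1 / b ^ s = (1 - (a / b) ^ s) / a ^ s := by
        rw [Real.div_rpow ha.le hb.le]
        field_simp
    _ ≤ max 1 s * (1 - a / b) / a ^ s := by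
        gcongr
        exact one_sub_rpow_le_max_mul_one_sub (by positivity) ((div_le_one hb).2 hab) s
    _ = max 1 s * (b - a) / (a ^ s * b) := by
        field_simp

theorem one_div_dist_rpow_sub_one_div_dist_rpow_le {X : Type*} [PseudoMetricSpace X] {x x' y : X}
    (hxy : 0 < dist x y) (hle : dist x y ≤ dist x' y) (s : ℝ) :
    1 / dist x y ^ s - 1 / dist x' y ^ s ≤
      max 1 s * dist x x' / (dist x y ^ s * dist x' y) := by
  refine (one_div_rpow_sub_one_div_rpow_le hxy hle s).trans ?_
  gcongr
  rw [dist_comm x x']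
  exact sub_le_iff_le_add.2 (dist_triangle x' x y)

section Reflection

variable {𝕜 E : Type*} [RCLike 𝕜] [NormedAddCommGroup E] [InnerProductSpace 𝕜 E]
  (K : Submodule 𝕜 E) [K.HasOrthogonalProjection]

theorem reflection_orthogonal_eq_sub_starProjection (x : E) :
    Kᗮ.reflection x = x - (2 : 𝕜) • K.starProjection x := by
  rw [Submodule.reflection_orthogonal_apply, Submodule.reflection_apply, neg_sub,
    ofNat_smul_eq_nsmul 𝕜]

theorem norm_reflection_orthogonal_sub_sq (x y : E) :
    ‖Kᗮ.reflection x - y‖ ^ 2 = ‖x - y‖ ^ 2 + 4 * RCLike.re ⟪K.starProjection x, y⟫_𝕜 := by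
  have inner_reflection : RCLike.re ⟪Kᗮ.reflection x, y⟫_𝕜 =
      RCLike.re ⟪x, y⟫_𝕜 - 2 * RCLike.re ⟪K.starProjection x, y⟫_𝕜 := by
    simp [reflection_orthogonal_eq_sub_starProjection, inner_sub_left, inner_smul_left]
  rw [norm_sub_sq (𝕜 := 𝕜), norm_sub_sq (𝕜 := 𝕜) x y, LinearIsometryEquiv.norm_map,
    inner_reflection]
  ring

theorem norm_sub_le_norm_reflection_orthogonal_sub {x y : E}
    (h : 0 ≤ RCLike.re ⟪K.starProjection x, y⟫_𝕜) : ‖x - y‖ ≤ ‖Kᗮ.reflection x - y‖ := by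
  refine le_of_sq_le_sq ?_ (norm_nonneg _)
  rw [norm_reflection_orthogonal_sub_sq]
  linarith

theorem stmt_3_general {x y : E} (hxy : x ≠ y)
    (hside : 0 ≤ RCLike.re ⟪K.starProjection x, y⟫_𝕜) {s : ℝ} (hs : 0 ≤ s) :
    0 ≤ 1 / ‖x - y‖ ^ s - 1 / ‖Kᗮ.reflection x - y‖ ^ s ∧
    1 / ‖x - y‖ ^ s - 1 / ‖Kᗮ.reflection x - y‖ ^ s ≤
      max 1 s * ‖x - Kᗮ.reflection x‖ / (‖x - y‖ ^ s * ‖Kᗮ.reflection x - y‖) := by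
  have hpos : 0 < ‖x - y‖ := norm_sub_pos_iff.2 hxy
  have hle : ‖x - y‖ ≤ ‖Kᗮ.reflection x - y‖ :=
    norm_sub_le_norm_reflection_orthogonal_sub K hside
  refine ⟨sub_nonneg.2 (by gcongr), ?_⟩
  simp only [← dist_eq_norm] at hpos hle ⊢
  exact one_div_dist_rpow_sub_one_div_dist_rpow_le hpos hle s

end Reflection

theorem starProjection_span_single {ι 𝕜 : Type*} [Fintype ι] [DecidableEq ι] [RCLike 𝕜]
    (i : ι) (x : EuclideanSpace 𝕜 ι) :
    (𝕜 ∙ EuclideanSpace.single i (1 : 𝕜)).starProjection x =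
      x i • EuclideanSpace.single i (1 : 𝕜) := by
  rw [Submodule.starProjection_unit_singleton 𝕜 (by simp), EuclideanSpace.inner_single_left,
    map_one, one_mul]

theorem reflectHyp_eq_reflection (d : ℕ) (i : Fin d) (x : EuclideanSpace ℝ (Fin d)) :
    reflectHyp d i x = (ℝ ∙ EuclideanSpace.single i (1 : ℝ))ᗮ.reflection x := by
  rw [reflection_orthogonal_eq_sub_starProjection, starProjection_span_single, smul_smul,
    reflectHyp]

/-- Let `α ∈ (0,1]`, `d > α`, and let `x, y ∈ ℝ^d` satisfy `xᵢ > 0`, `yᵢ > 0`, `x ≠ y`. Then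
`0 ≤ 1/|x − y|^(d−α) − 1/|x̂ − y|^(d−α)
   ≤ max(2, 2(d−α)) · |x − x̂| / (|x − y|^(d−α) · |x̂ − y|)`. -/
theorem stmt_3 (d : ℕ) (α : ℝ) (hα0 : 0 < α) (hα1 : α ≤ 1) (hd : α < (d : ℝ))
    (i : Fin d) (x y : EuclideanSpace ℝ (Fin d))
    (hx : 0 < x i) (hy : 0 < y i) (hxy : x ≠ y) :
    0 ≤ 1 / ‖x - y‖ ^ ((d : ℝ) - α) - 1 / ‖reflectHyp d i x - y‖ ^ ((d : ℝ) - α) ∧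
    1 / ‖x - y‖ ^ ((d : ℝ) - α) - 1 / ‖reflectHyp d i x - y‖ ^ ((d : ℝ) - α) ≤
      max 2 (2 * ((d : ℝ) - α)) * ‖x - reflectHyp d i x‖ /
        (‖x - y‖ ^ ((d : ℝ) - α) * ‖reflectHyp d i x - y‖) := by
  have hside : 0 ≤ ⟪(ℝ ∙ EuclideanSpace.single i (1 : ℝ)).starProjection x, y⟫_ℝ := by
    rw [starProjection_span_single, real_inner_smul_left, EuclideanSpace.inner_single_left,
      map_one, one_mul]
    positivity
  obtain ⟨lower, upper⟩ := stmt_3_general (𝕜 := ℝ) _ hxy hside (sub_nonneg.2 hd.le)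
  rw [reflectHyp_eq_reflection]
  refine ⟨lower, upper.trans ?_⟩
  gcongr <;> linarith
end

section
/- Fix r > 0. For all real x, y with 0 < x < r/2, 0 < y < r/2 and x ≠ y, one has G_r(x,y) − G_r(−x,y) ≥ (1/π) · min( 2x/(15|x − y|) , log( (x + y)/(4|x − y|) ) ). -/
/-!
With `p(x, y) = r |x - y| / (r² - x y)` one has `1 + w_r(x, y) = p(x, y)⁻²`, so that
`π G_r(x, y) = arcosh (1 / p(x, y))`. Since `arcosh t - log t = log (1 + √(1 - t⁻²))` is increasing
and `p(x, y) ≤ p(-x, y)` when `x y ≥ 0`, the difference `π (G_r(x, y) - G_r(-x, y))` is at least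
`log (p(-x, y) / p(x, y))`. Away from the endpoints this quotient is comparable to
`|x + y| / |x - y|`, so the logarithmic member of the minimum is by itself a lower bound.
-/

/-- `w_r(x,y) = (r² − x²)(r² − y²)/(r²(x − y)²)`. -/
noncomputable def wGreen (r x y : ℝ) : ℝ :=
  (r ^ 2 - x ^ 2) * (r ^ 2 - y ^ 2) / (r ^ 2 * (x - y) ^ 2)

/-- The Green function of the interval `(−r, r)` for the Cauchy process:
`G_r(x,y) = (1/π) log(√(w_r(x,y)) + √(1 + w_r(x,y)))`. -/
noncomputable def GGreen (r x y : ℝ) : ℝ :=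
  (1 / Real.pi) * Real.log (Real.sqrt (wGreen r x y) + Real.sqrt (1 + wGreen r x y))

theorem log_div_le_arcosh_sub_arcosh {s t : ℝ} (ht : 0 < t) (hts : t ≤ s) :
    Real.log (s / t) ≤ Real.arcosh s - Real.arcosh t := by
  have hs : 0 < s := ht.trans_le hts
  have one_le_ratio : 1 ≤ s / t := (one_le_div ht).2 hts
  have sqrt_scale : s / t * √(t ^ 2 - 1) ≤ √(s ^ 2 - 1) := by
    rw [← Real.sqrt_sq (div_pos hs ht).le, ← Real.sqrt_mul (sq_nonneg _)]
    apply Real.sqrt_le_sqrt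
    calc (s / t) ^ 2 * (t ^ 2 - 1) = s ^ 2 - (s / t) ^ 2 := by field_simp
      _ ≤ s ^ 2 - 1 := sub_le_sub_left (one_le_pow₀ one_le_ratio) _
  rw [Real.arcosh, Real.arcosh, le_sub_iff_add_le, ← Real.log_mul (by positivity) (by positivity)]
  apply Real.log_le_log (by positivity)
  calc s / t * (t + √(t ^ 2 - 1)) = s + s / t * √(t ^ 2 - 1) := by field_simp
    _ ≤ s + √(s ^ 2 - 1) := by gcongr

section OrderedRing

variable {R : Type*} [CommRing R] [LinearOrder R] [IsStrictOrderedRing R]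

theorem mul_lt_sq_of_abs_lt {r x y : R} (hx : |x| < r) (hy : |y| < r) : x * y < r ^ 2 :=
  calc x * y ≤ |x| * |y| := (le_abs_self _).trans_eq (abs_mul x y)
    _ < r * r := mul_lt_mul'' hx hy (abs_nonneg x) (abs_nonneg y)
    _ = r ^ 2 := (sq r).symm

theorem add_ne_zero_of_ne_of_mul_nonneg {x y : R} (hxy : x ≠ y) (hmul : 0 ≤ x * y) :
    x + y ≠ 0 := by
  intro hadd
  obtain rfl : x = -y := eq_neg_of_add_eq_zero_left hadd
  have hy : y = 0 := by
    rw [neg_mul, neg_nonneg] at hmul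
    exact mul_self_eq_zero.1 (hmul.antisymm (mul_self_nonneg y))
  exact hxy (by rw [hy, neg_zero])

end OrderedRing

/-- The pseudo-hyperbolic distance `|a - b| / |1 - a b|` of the unit disc, restricted to its real
diameter and rescaled by `a = x / r`, `b = y / r`. The denominator carries no absolute value, since
`x y < r²` on `(-r, r)`. The Green function `GGreen r x y` depends on `x` and `y` only
through it. -/
noncomputable def pseudoHyperbolicDist (r x y : ℝ) : ℝ :=
  r * |x - y| / (r ^ 2 - x * y)

theorem pseudoHyperbolicDist_neg_left (r x y : ℝ) :
    pseudoHyperbolicDist r (-x) y = r * |x + y| / (r ^ 2 + x * y) := by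
  rw [pseudoHyperbolicDist, neg_mul, sub_neg_eq_add, ← neg_add', abs_neg]

theorem pseudoHyperbolicDist_pos {r x y : ℝ} (hx : |x| < r) (hy : |y| < r) (hxy : x ≠ y) :
    0 < pseudoHyperbolicDist r x y :=
  div_pos (mul_pos ((abs_nonneg x).trans_lt hx) (abs_sub_pos.2 hxy))
    (sub_pos.2 (mul_lt_sq_of_abs_lt hx hy))

theorem pseudoHyperbolicDist_le_neg_left {r x y : ℝ} (hx : |x| < r) (hy : |y| < r)
    (hmul : 0 ≤ x * y) : pseudoHyperbolicDist r x y ≤ pseudoHyperbolicDist r (-x) y := by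
  have hr : 0 < r := (abs_nonneg x).trans_lt hx
  have hsub : 0 < r ^ 2 - x * y := sub_pos.2 (mul_lt_sq_of_abs_lt hx hy)
  have hx2 : 0 ≤ r ^ 2 - x ^ 2 := sub_nonneg.2 (sq_lt_sq' (abs_lt.1 hx).1 (abs_lt.1 hx).2).le
  have hy2 : 0 ≤ r ^ 2 - y ^ 2 := sub_nonneg.2 (sq_lt_sq' (abs_lt.1 hy).1 (abs_lt.1 hy).2).le
  have cross_le : |x - y| * (r ^ 2 + x * y) ≤ |x + y| * (r ^ 2 - x * y) := by
    rw [← sq_le_sq₀ (by positivity) (by positivity), mul_pow, mul_pow, sq_abs, sq_abs,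
      ← sub_nonneg]
    calc 0 ≤ 4 * (x * y) * ((r ^ 2 - x ^ 2) * (r ^ 2 - y ^ 2)) := by positivity
      _ = (x + y) ^ 2 * (r ^ 2 - x * y) ^ 2 - (x - y) ^ 2 * (r ^ 2 + x * y) ^ 2 := by ring
  rw [pseudoHyperbolicDist_neg_left, pseudoHyperbolicDist, div_le_div_iff₀ hsub (by positivity),
    mul_assoc, mul_assoc]
  gcongr

theorem one_add_wGreen {r x y : ℝ} (hr : r ≠ 0) (hxy : x ≠ y) :
    1 + wGreen r x y = (pseudoHyperbolicDist r x y)⁻¹ ^ 2 := by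
  have hsub : x - y ≠ 0 := sub_ne_zero.2 hxy
  rw [wGreen, pseudoHyperbolicDist, inv_div, div_pow, mul_pow, sq_abs]
  field_simp
  ring

theorem GGreen_eq_arcosh {r x y : ℝ} (hx : |x| < r) (hy : |y| < r) (hxy : x ≠ y) :
    GGreen r x y = (1 / Real.pi) * Real.arcosh (pseudoHyperbolicDist r x y)⁻¹ := by
  have hr : 0 < r := (abs_nonneg x).trans_lt hx
  have hw := one_add_wGreen hr.ne' hxy
  rw [GGreen, Real.arcosh, hw, Real.sqrt_sq (inv_pos.2 (pseudoHyperbolicDist_pos hx hy hxy)).le,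
    ← hw, add_sub_cancel_left, add_comm]

theorem log_pseudoHyperbolicDist_div_le_GGreen_sub {r x y : ℝ} (hx : |x| < r) (hy : |y| < r)
    (hxy : x ≠ y) (hmul : 0 ≤ x * y) :
    (1 / Real.pi) * Real.log (pseudoHyperbolicDist r (-x) y / pseudoHyperbolicDist r x y) ≤
      GGreen r x y - GGreen r (-x) y := by
  have hneg : |-x| < r := by rwa [abs_neg]
  have hne : -x ≠ y :=
    neg_eq_iff_add_eq_zero.not.2 (add_ne_zero_of_ne_of_mul_nonneg hxy hmul)
  have hp := pseudoHyperbolicDist_pos hx hy hxy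
  have hp_neg := pseudoHyperbolicDist_pos hneg hy hne
  rw [GGreen_eq_arcosh hx hy hxy, GGreen_eq_arcosh hneg hy hne, ← mul_sub,
    ← inv_div_inv (pseudoHyperbolicDist r x y)]
  gcongr
  exact log_div_le_arcosh_sub_arcosh (inv_pos.2 hp_neg)
    (inv_anti₀ hp (pseudoHyperbolicDist_le_neg_left hx hy hmul))

theorem div_four_mul_le_pseudoHyperbolicDist_div {r x y : ℝ} (hr : 0 < r) (hmul : 0 ≤ x * y)
    (hle : x * y ≤ 3 / 5 * r ^ 2) :
    |x + y| / (4 * |x - y|) ≤ pseudoHyperbolicDist r (-x) y / pseudoHyperbolicDist r x y := by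
  have quarter_le : 1 / 4 ≤ (r ^ 2 - x * y) / (r ^ 2 + x * y) := by
    rw [div_le_div_iff₀ four_pos (by positivity)]
    linarith
  calc |x + y| / (4 * |x - y|) = |x + y| / |x - y| * (1 / 4) := by ring
    _ ≤ |x + y| / |x - y| * ((r ^ 2 - x * y) / (r ^ 2 + x * y)) := by gcongr
    _ = pseudoHyperbolicDist r (-x) y / pseudoHyperbolicDist r x y := by
      rw [pseudoHyperbolicDist_neg_left, pseudoHyperbolicDist]
      field_simp

theorem stmt_9_general {r x y : ℝ} (hx : |x| < r) (hy : |y| < r) (hxy : x ≠ y)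
    (hmul : 0 ≤ x * y) (hle : x * y ≤ 3 / 5 * r ^ 2) :
    (1 / Real.pi) * Real.log (|x + y| / (4 * |x - y|)) ≤ GGreen r x y - GGreen r (-x) y := by
  have hadd : 0 < |x + y| := abs_pos.2 (add_ne_zero_of_ne_of_mul_nonneg hxy hmul)
  have hquot : 0 < |x + y| / (4 * |x - y|) := div_pos hadd (mul_pos four_pos (abs_sub_pos.2 hxy))
  have hratio := div_four_mul_le_pseudoHyperbolicDist_div ((abs_nonneg x).trans_lt hx) hmul hle
  have hlog := Real.log_le_log hquot hratio
  exact (mul_le_mul_of_nonneg_left hlog (by positivity)).trans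
    (log_pseudoHyperbolicDist_div_le_GGreen_sub hx hy hxy hmul)

/-- For `0 < x < r/2`, `0 < y < r/2`, `x ≠ y`:
`G_r(x,y) − G_r(−x,y) ≥ (1/π) · min(2x/(15|x−y|), log((x+y)/(4|x−y|)))`. -/
theorem stmt_9 (r x y : ℝ) (hr : 0 < r) (hx0 : 0 < x) (hxr : x < r / 2)
    (hy0 : 0 < y) (hyr : y < r / 2) (hxy : x ≠ y) :
    GGreen r x y - GGreen r (-x) y ≥
      (1 / Real.pi) * min (2 * x / (15 * |x - y|)) (Real.log ((x + y) / (4 * |x - y|))) := by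
  have hx : |x| < r := by rw [abs_of_pos hx0]; linarith
  have hy : |y| < r := by rw [abs_of_pos hy0]; linarith
  have hle : x * y ≤ 3 / 5 * r ^ 2 := by nlinarith
  have hlog := stmt_9_general hx hy hxy (mul_pos hx0 hy0).le hle
  rw [abs_of_pos (add_pos hx0 hy0)] at hlog
  exact (mul_le_mul_of_nonneg_left (min_le_right _ _) (by positivity)).trans hlog
end
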